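/- Let (R,m) be a Cohen–Macaulay local ring of dimension d with 1≤d≤2 and infinite residue field, I_1,…,I_s m-primary ideals, and F = {F(n)}_{n∈ℤ^s} an I-admissible filtration of ideals in R. Suppose e_{(d−1)e_i}(F) = 0 for i = 1,…,s. Then: (1) if d = 1, then P_F(n) = H_F(n) for all n∈ℕ^s; (2) if d = 2 and H^1_{R_{++}}(R(F))_n = 0 for all n∈ℕ^s, then P_F(n) = H_F(n) for all n∈ℕ^s and e_{(0,…,0)}(F) = 0. -/

import Mathlib

/-! Common definitions for multigraded filtrations of ideals
(following Sarkar–Verma, "Postulation and reduction vectors of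
multigraded filtrations of ideals"). -/

open Finset IsLocalRing

/-- The vector `e = (1,…,1) ∈ ℤˢ`. -/
def evec (s : ℕ) : Fin s → ℤ := fun _ => 1

/-- `n⁺`, the componentwise positive part of a vector. -/
def vplus {s : ℕ} (n : Fin s → ℤ) : Fin s → ℤ := fun i => max (n i) 0

/-- `I^n = I₁^{n₁} ⋯ I_s^{n_s}` with the convention `I_i^{n_i} = R` for `n_i ≤ 0`. -/
def prodPow {R : Type*} [CommRing R] {s : ℕ} (I : Fin s → Ideal R) (n : Fin s → ℤ) : Ideal R :=
  ∏ i, I i ^ (n i).toNat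

/-- An ideal is `m`-primary iff it is proper and contains a power of the maximal ideal. -/
def IsMPrimary (R : Type*) [CommRing R] [IsLocalRing R] (I : Ideal R) : Prop :=
  I ≠ ⊤ ∧ maximalIdeal R ≤ I.radical

/-- A Cohen–Macaulay local ring: some system of parameters (a regular sequence of
length equal to the Krull dimension inside the maximal ideal) exists. -/
def IsCMLocal (R : Type*) [CommRing R] [IsLocalRing R] : Prop :=
  ∃ rs : List R, (∀ x ∈ rs, x ∈ maximalIdeal R) ∧ RingTheory.Sequence.IsRegular R rs ∧
    (rs.length : WithBot ℕ∞) = ringKrullDim R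

/-- A `ℤˢ`-graded `I`-admissible filtration of ideals.  Admissibility (finiteness of the
extended Rees ring `R'(F)` as a module over `R'(I)`) is recorded through the equivalent
condition that `F(n + m) = I^n F(m)` for all `n ≥ 0`, for a suitable fixed `m ≥ 0`. -/
structure AdmissibleFiltration (R : Type*) [CommRing R] (s : ℕ) (I : Fin s → Ideal R) where
  F : (Fin s → ℤ) → Ideal R
  prodPow_le : ∀ n, prodPow I n ≤ F n
  mul_le : ∀ m n, F m * F n ≤ F (m + n)
  antitone : ∀ m n : Fin s → ℤ, m ≤ n → F n ≤ F m
  plus_eq : ∀ n, F n = F (vplus n)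
  admissible : ∃ m : Fin s → ℤ, 0 ≤ m ∧
    ∀ n : Fin s → ℤ, 0 ≤ n → F (n + m) = prodPow I n * F m

/-- The length `λ_R(M)` of a module, as an integer (the longest chain of submodules;
this is the usual length for modules of finite length). -/
noncomputable def lenI (R M : Type*) [CommRing R] [AddCommGroup M] [Module R M] : ℤ :=
  (((Order.krullDim (Submodule R M)).unbotD 0).toNat : ℤ)

/-- The Hilbert function `H_F(n) = λ(R/F(n))` of a filtration. -/
noncomputable def hilbFn {R : Type*} [CommRing R] {s : ℕ} {I : Fin s → Ideal R}
    (F : AdmissibleFiltration R s I) (n : Fin s → ℤ) : ℤ :=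
  lenI R (R ⧸ F.F n)

/-- The multigraded Hilbert polynomial with coefficient data `c = (e_α)`:
`P(n) = Σ_{|α| ≤ d} (−1)^{d−|α|} e_α ∏ᵢ binom(nᵢ+αᵢ−1, αᵢ)`. -/
noncomputable def hilbPoly (s d : ℕ) (c : (Fin s → ℕ) → ℤ) (n : Fin s → ℤ) : ℤ :=
  ∑ α ∈ Finset.univ.filter (fun α : Fin s → Fin (d+1) => (∑ i, (α i : ℕ)) ≤ d),
    (-1)^(d - ∑ i, (α i : ℕ)) * c (fun i => (α i : ℕ)) *
      ∏ i, Ring.choose (n i + ((α i : ℕ) : ℤ) - 1) (α i : ℕ)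

/-- `c : (Fin s → ℕ) → ℤ` is the family of Hilbert coefficients of `F`:
the corresponding polynomial agrees with the Hilbert function for all large `n`. -/
noncomputable def IsHilbCoeffs {R : Type*} [CommRing R] {s : ℕ} {I : Fin s → Ideal R}
    (F : AdmissibleFiltration R s I) (d : ℕ) (c : (Fin s → ℕ) → ℤ) : Prop :=
  ∃ N : ℕ, ∀ n : Fin s → ℤ, (∀ i, (N : ℤ) ≤ n i) → hilbPoly s d c n = hilbFn F n

/-- The Samuel polynomial `P_a(n) = Σ_{i=0}^{d} (−1)^i e_i binom(n+d−1−i, d−i)` with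
coefficient data `c = (e_i)`. -/
noncomputable def samuelPoly (d : ℕ) (c : ℕ → ℤ) (n : ℤ) : ℤ :=
  ∑ i ∈ Finset.range (d + 1), (-1)^i * c i * Ring.choose (n + (d : ℤ) - 1 - (i : ℤ)) (d - i)

/-- `c` is the family of Hilbert coefficients of the `m`-primary ideal `a`. -/
noncomputable def IsSamuelCoeffs {R : Type*} [CommRing R] (a : Ideal R) (d : ℕ)
    (c : ℕ → ℤ) : Prop :=
  ∃ N : ℕ, ∀ n : ℕ, N ≤ n → samuelPoly d c (n : ℤ) = lenI R (R ⧸ a ^ n)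

section Reductions

variable {R : Type*} [CommRing R] {s d : ℕ} {I : Fin s → Ideal R}

/-- The ideal `J = (y₁,…,y_d)` of a complete reduction datum, where `y_j = x_{1j}⋯x_{sj}`. -/
def crIdeal (x : Fin s → Fin d → R) : Ideal R :=
  Ideal.span (Set.range fun j => ∏ i, x i j)

/-- `A = {x_{ij} ∈ I_i}` is a complete reduction of `F`: `J·F(n) = F(n+e)` for all large `n`. -/
def IsCompleteReduction (F : AdmissibleFiltration R s I) (x : Fin s → Fin d → R) : Prop :=
  (∀ i j, x i j ∈ I i) ∧
  ∃ N : ℕ, ∀ n : Fin s → ℤ, (∀ i, (N : ℤ) ≤ n i) →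
    crIdeal x * F.F n = F.F (n + evec s)

/-- A good complete reduction: in addition `F(m) ∩ (y₁) = y₁ F(m−e)` for all large `m`. -/
def IsGoodCompleteReduction (F : AdmissibleFiltration R s I) (x : Fin s → Fin d → R) : Prop :=
  IsCompleteReduction F x ∧
  ∀ h : 0 < d, ∃ N : ℕ, ∀ m : Fin s → ℤ, (∀ i, (N : ℤ) ≤ m i) →
    F.F m ⊓ Ideal.span {∏ i, x i ⟨0, h⟩} =
      Ideal.span {∏ i, x i ⟨0, h⟩} * F.F (m - evec s)

end Reductions

/-- The first difference operator `Δ¹ f (n) = f(n+e) − f(n)`; `Δ^k` is its `k`-th iterate. -/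
def deltaOp {s : ℕ} (f : (Fin s → ℤ) → ℤ) : (Fin s → ℤ) → ℤ :=
  fun n => f (n + evec s) - f n

/-- The Ratliff–Rush closure filtration `F̆(n) = ⋃_{k ≥ 1} (F(n+ke) : F(e)^k)`. -/
def ratliffRush {R : Type*} [CommRing R] {s : ℕ} {I : Fin s → Ideal R}
    (F : AdmissibleFiltration R s I) (n : Fin s → ℤ) : Ideal R :=
  ⨆ k : ℕ, (F.F (n + ((k + 1) : ℕ) • evec s)).colon ((F.F (evec s) ^ (k + 1) : Ideal R) : Set R)

/-- Vanishing of `H¹_{R₊₊}(R(F))_n` for all `n ∈ ℕˢ`.  By Proposition 4.1 of the paper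
(see STATEMENT 9), the degree-`n` component of this local cohomology module is isomorphic
to `F̆(n)/F(n)`, so its vanishing for all `n ≥ 0` is the statement that the Ratliff–Rush
closure filtration agrees with `F` in all nonnegative degrees. -/
def H1ReesVanishes {R : Type*} [CommRing R] {s : ℕ} {I : Fin s → Ideal R}
    (F : AdmissibleFiltration R s I) : Prop :=
  ∀ n : Fin s → ℤ, 0 ≤ n → ratliffRush F n = F.F n

/-! The functions `P_F` and `H_F` are compared one coordinate direction at a time.  For `x ∈ I i`
the increment `H_F(n + e_i) - H_F(n)` is at most the length of `R / (F(n + e_i) + (x))`, with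
equality when `F(n + e_i) : x = F(n)`.  Noetherianity of the multi-Rees algebra and the infinite
residue field make a generic `x ∈ I i` a nonzerodivisor for which equality holds at all large `n`.

In dimension one the increments of `P_F` along `e_i` are then constantly equal to `λ(R / (x))`, so
`P_F - H_F` is nondecreasing on `ℕˢ`.  It vanishes at the origin because `e_0 = 0`, and it vanishes
at all large `n`; hence it is zero.

In dimension two the vanishing of local cohomology upgrades `F(n + e_i) : x = F(n)` from large `n`
to all `n ≥ 0`, so the increments of `P_F - H_F` along `e_i` are the values of the same difference
for the filtration induced on the one-dimensional ring `R / (x)`, whose constant coefficient is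
`e_{e_i}(F) = 0`.  They vanish, so `P_F - H_F` is constant, hence zero, and `P_F(0) = 0` reads
`e_0 = 0`. -/

/-! ### Generic elements -/

section GenericElements

variable {R : Type*} [CommRing R] {M : Type*} [AddCommGroup M] [Module R M]

variable (R M) in
/-- The filter of generic elements of `M`: a property holds eventually along it if it holds
outside finitely many proper submodules. -/
def genericFilter : Filter M :=
  ⨅ p : {p : Submodule R M // p ≠ ⊤}, Filter.principal ((p : Submodule R M) : Set M)ᶜ

theorem eventually_generic_notMem {p : Submodule R M} (hp : p ≠ ⊤) :
    ∀ᶠ x in genericFilter R M, x ∉ p :=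
  Filter.mem_iInf_of_mem ⟨p, hp⟩ (Filter.mem_principal_self _)

theorem infinite_quotient_of_ne_top [IsLocalRing R] [Infinite (ResidueField R)]
    {p : Submodule R M} (hp : p ≠ ⊤) : Infinite (M ⧸ p) := by
  obtain ⟨v, -, hv⟩ := SetLike.exists_of_lt hp.lt_top
  set f : R →ₗ[R] M ⧸ p := LinearMap.toSpanSingleton R (M ⧸ p) (p.mkQ v)
  have hker : LinearMap.ker f ≤ maximalIdeal R := IsLocalRing.le_maximalIdeal fun h => hv <| by
    have h1 : f 1 = 0 := LinearMap.mem_ker.1 (h ▸ Submodule.mem_top)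
    simpa [f] using h1
  have : Infinite (R ⧸ maximalIdeal R) := ‹Infinite (ResidueField R)›
  have : Infinite (R ⧸ LinearMap.ker f) :=
    Infinite.of_surjective _ (Ideal.Quotient.factor_surjective hker)
  exact Infinite.of_injective _ (LinearMap.ker_eq_bot.1 (Submodule.ker_liftQ_eq_bot' _ f rfl))

-- A finite cover of `M` by submodules has a member of finite index (B. H. Neumann).
instance genericFilter_neBot [IsLocalRing R] [Infinite (ResidueField R)] :
    (genericFilter R M).NeBot := by
  refine (Filter.hasBasis_iInf_principal_finite _).neBot_iff.2 fun {t} ht => ?_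
  by_contra hempty
  have hcover : ⋃ p ∈ ht.toFinset, ((p : Submodule R M) : Set M) = Set.univ := by
    simpa [Set.not_nonempty_iff_eq_empty, ← Set.compl_iUnion] using hempty
  obtain ⟨p, -, hp⟩ := Submodule.exists_finiteIndex_of_cover hcover
  have := infinite_quotient_of_ne_top p.2
  exact not_finite_iff_infinite.2 this AddSubgroup.finite_quotient_of_finiteIndex

section Colon

variable {S : Type*} [CommRing S] [Algebra R S] [IsNoetherianRing S] (φ : M →ₗ[R] S)

theorem exists_eventually_generic_colon_of_isPrimary {Q : Ideal S} (hQ : Q.IsPrimary) :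
    ∃ r : ℕ, ∀ᶠ x in genericFilter R M, ∀ g, φ x * g ∈ Q →
      ∀ y ∈ Ideal.span (Set.range φ) ^ r, y * g ∈ Q := by
  by_cases hφ : (Q.radical.restrictScalars R).comap φ = ⊤
  · have hle : Ideal.span (Set.range φ) ≤ Q.radical := by
      rw [Ideal.span_le]
      rintro _ ⟨x, rfl⟩
      exact hφ.ge Submodule.mem_top
    obtain ⟨r, hr⟩ := Ideal.exists_pow_le_of_le_radical_of_fg hle (IsNoetherian.noetherian _)
    exact ⟨r, .of_forall fun x g _ y hy => Q.mul_mem_right g (hr hy)⟩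
  · refine ⟨0, (eventually_generic_notMem hφ).mono fun x hx g hg y _ => ?_⟩
    rw [mul_comm] at hg
    exact Q.mul_mem_left y (((Ideal.isPrimary_iff.1 hQ).2 hg).resolve_right hx)

theorem exists_eventually_generic_colon (Q : Ideal S) :
    ∃ r : ℕ, ∀ᶠ x in genericFilter R M, ∀ g, φ x * g ∈ Q →
      ∀ y ∈ Ideal.span (Set.range φ) ^ r, y * g ∈ Q := by
  obtain ⟨t, rfl, ht⟩ := Submodule.isLasker S S Q
  choose! r hr using fun J hJ => exists_eventually_generic_colon_of_isPrimary φ (ht (J := J) hJ)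
  refine ⟨t.sup r, ((Filter.eventually_all_finset t).2 hr).mono fun x hx g hg y hy => ?_⟩
  rw [Submodule.mem_finsetInf] at hg ⊢
  exact fun J hJ => hx J hJ g (hg J hJ) y (Ideal.pow_le_pow_right (Finset.le_sup hJ) hy)

end Colon

end GenericElements

section ZeroSocle

variable {R : Type*} [CommRing R] [IsLocalRing R]

variable (R) in
/-- The socle `(0 : m)` of the local ring `R` vanishes.  For Noetherian `R` this says that `R` has
positive depth. -/
def HasZeroSocle : Prop :=
  ∀ w : R, (∀ a ∈ maximalIdeal R, a * w = 0) → w = 0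

theorem HasZeroSocle.eq_zero_of_forall_maximalIdeal_pow_mul (hR : HasZeroSocle R) {q : ℕ} {w : R}
    (h : ∀ y ∈ maximalIdeal R ^ q, y * w = 0) : w = 0 := by
  induction q generalizing w with
  | zero => simpa using h 1 (by simp)
  | succ q ih =>
    refine ih fun y hy => hR _ fun a ha => ?_
    rw [← mul_assoc]
    exact h _ (pow_succ' (maximalIdeal R) q ▸ Ideal.mul_mem_mul ha hy)

variable [IsNoetherianRing R]

theorem HasZeroSocle.eq_zero_of_forall_pow_mul (hR : HasZeroSocle R) {I : Ideal R}
    (hI : maximalIdeal R ≤ I.radical) {r : ℕ} {w : R} (h : ∀ y ∈ I ^ r, y * w = 0) : w = 0 := by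
  obtain ⟨q, hq⟩ := Ideal.exists_pow_le_of_le_radical_of_fg hI (IsNoetherian.noetherian _)
  refine hR.eq_zero_of_forall_maximalIdeal_pow_mul (q := q * r) fun y hy => h y ?_
  exact Ideal.pow_right_mono hq r (pow_mul (maximalIdeal R) q r ▸ hy)

theorem HasZeroSocle.eventually_generic_mem_nonZeroDivisors (hR : HasZeroSocle R) {I : Ideal R}
    (hI : maximalIdeal R ≤ I.radical) :
    ∀ᶠ x : I in genericFilter R I, (x : R) ∈ nonZeroDivisors R := by
  obtain ⟨r, hr⟩ := exists_eventually_generic_colon (Submodule.subtype I) ⊥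
  refine hr.mono fun x hx => mem_nonZeroDivisors_iff_right.2 fun w hw => ?_
  refine hR.eq_zero_of_forall_pow_mul hI (r := r) fun y hy => ?_
  exact hx w (by simpa [mul_comm] using hw) y (by simpa using hy)

end ZeroSocle

/-! ### Multi-Rees algebras -/

section MultiRees

variable {R σ : Type*} [CommRing R] (I : σ → Ideal R)

/-- The product `∏ i, I i ^ a i` of powers of a family of ideals, with exponents in `ℕ`. -/
def multiPow (a : σ →₀ ℕ) : Ideal R :=
  a.prod fun i k => I i ^ k

@[simp]
theorem multiPow_zero : multiPow I 0 = ⊤ := by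
  simp [multiPow]

@[simp]
theorem multiPow_single (i : σ) (r : ℕ) : multiPow I (Finsupp.single i r) = I i ^ r :=
  Finsupp.prod_single_index (pow_zero _)

theorem multiPow_add (a b : σ →₀ ℕ) : multiPow I (a + b) = multiPow I a * multiPow I b := by
  classical
  exact Finsupp.prod_add_index' (fun _ => pow_zero _) fun _ _ _ => pow_add _ _ _

theorem multiPow_antitone : Antitone (multiPow I) := by
  intro a b h
  obtain ⟨c, rfl⟩ := exists_add_of_le h
  exact (multiPow_add I a c).trans_le Ideal.mul_le_left

/-- The multi-Rees algebra `⊕ₐ I^a t^a` of a family of ideals, as a subalgebra of the polynomial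
ring in the variables `t_i`. -/
def multiReesAlgebra : Subalgebra R (MvPolynomial σ R) where
  carrier := {f | ∀ a, f.coeff a ∈ multiPow I a}
  mul_mem' {f g} hf hg a := by
    classical
    rw [MvPolynomial.coeff_mul]
    refine Ideal.sum_mem _ fun p hp => ?_
    rw [← HasAntidiagonal.mem_antidiagonal.1 hp, multiPow_add]
    exact Ideal.mul_mem_mul (hf _) (hg _)
  add_mem' hf hg a := by
    rw [MvPolynomial.coeff_add]
    exact Ideal.add_mem _ (hf a) (hg a)
  algebraMap_mem' r a := by
    classical
    rw [MvPolynomial.algebraMap_eq, MvPolynomial.coeff_C]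
    split_ifs with h
    · simp [← h]
    · exact Ideal.zero_mem _

variable {I} in
theorem monomial_mem_multiReesAlgebra {a : σ →₀ ℕ} {z : R} (hz : z ∈ multiPow I a) :
    MvPolynomial.monomial a z ∈ multiReesAlgebra I := by
  classical
  intro b
  rw [MvPolynomial.coeff_monomial]
  split_ifs with h
  · exact h ▸ hz
  · exact Ideal.zero_mem _

variable {I} in
theorem multiPow_le_comap_monomial {A : Subalgebra R (MvPolynomial σ R)}
    (hA : ∀ i, I i ≤ (Subalgebra.toSubmodule A).comap
      (MvPolynomial.monomial (Finsupp.single i 1))) (a : σ →₀ ℕ) :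
    multiPow I a ≤ (Subalgebra.toSubmodule A).comap (MvPolynomial.monomial a) := by
  have hadd {b c : σ →₀ ℕ} {J K : Ideal R}
      (hJ : J ≤ (Subalgebra.toSubmodule A).comap (MvPolynomial.monomial b))
      (hK : K ≤ (Subalgebra.toSubmodule A).comap (MvPolynomial.monomial c)) :
      J * K ≤ (Subalgebra.toSubmodule A).comap (MvPolynomial.monomial (b + c)) := by
    refine Ideal.mul_le.2 fun u hu v hv => ?_
    rw [Submodule.mem_comap, ← MvPolynomial.monomial_mul]
    exact A.mul_mem (hJ hu) (hK hv)
  have hzero : ⊤ ≤ (Subalgebra.toSubmodule A).comap (MvPolynomial.monomial 0) :=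
    fun y _ => A.algebraMap_mem y
  induction a using Finsupp.induction_linear with
  | zero => simpa using hzero
  | add b c hb hc => exact (multiPow_add I b c).trans_le (hadd hb hc)
  | single i r =>
    rw [multiPow_single]
    induction r with
    | zero => simpa using hzero
    | succ r ih => rw [pow_succ, Finsupp.single_add]; exact hadd ih (hA i)

variable {I} in
theorem multiReesAlgebra_le {A : Subalgebra R (MvPolynomial σ R)}
    (hA : ∀ i, I i ≤ (Subalgebra.toSubmodule A).comap
      (MvPolynomial.monomial (Finsupp.single i 1))) : multiReesAlgebra I ≤ A := by
  intro f hf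
  rw [MvPolynomial.as_sum f]
  exact A.sum_mem fun a _ => multiPow_le_comap_monomial hA a (hf a)

theorem multiReesAlgebra_fg [Finite σ] [IsNoetherianRing R] : (multiReesAlgebra I).FG := by
  choose g hg using fun i => IsNoetherian.noetherian (I i)
  let T : Set (MvPolynomial σ R) :=
    ⋃ i, MvPolynomial.monomial (Finsupp.single i 1) '' (g i : Set R)
  refine Subalgebra.fg_def.2
    ⟨T, Set.finite_iUnion fun i => (g i).finite_toSet.image _, le_antisymm ?_ ?_⟩
  · refine Algebra.adjoin_le (Set.iUnion_subset fun i => ?_)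
    rintro _ ⟨y, hy, rfl⟩
    refine monomial_mem_multiReesAlgebra ?_
    rw [multiPow_single, pow_one, ← hg i]
    exact Submodule.subset_span hy
  · refine multiReesAlgebra_le fun i => ?_
    rw [← hg i, Submodule.span_le]
    exact fun y hy => Algebra.subset_adjoin (Set.mem_iUnion_of_mem i ⟨y, hy, rfl⟩)

instance [Finite σ] [IsNoetherianRing R] : IsNoetherianRing (multiReesAlgebra I) :=
  have : Algebra.FiniteType R (multiReesAlgebra I) :=
    ⟨(multiReesAlgebra I).fg_top.2 (multiReesAlgebra_fg I)⟩
  Algebra.FiniteType.isNoetherianRing R _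

/-- A family of ideals `L a`, `a ∈ ℕ^σ`, is stable under `I` if `⊕ₐ L a t^a` is a module over the
multi-Rees algebra of `I`. -/
def IsReesStable (L : (σ →₀ ℕ) → Ideal R) : Prop :=
  ∀ a b, multiPow I a * L b ≤ L (a + b)

namespace IsReesStable

variable {I} {L : (σ →₀ ℕ) → Ideal R}

/-- The homogeneous ideal of the multi-Rees algebra whose component of degree `a` is
`L a ⊓ multiPow I a`. -/
def reesIdeal (hL : IsReesStable I L) : Ideal (multiReesAlgebra I) where
  carrier := {f | ∀ a, f.1.coeff a ∈ L a}
  add_mem' hf hg a := by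
    rw [Subalgebra.coe_add, MvPolynomial.coeff_add]
    exact Ideal.add_mem _ (hf a) (hg a)
  zero_mem' a := Ideal.zero_mem _
  smul_mem' f g hg a := by
    classical
    rw [smul_eq_mul, Subalgebra.coe_mul, MvPolynomial.coeff_mul]
    refine Ideal.sum_mem _ fun p hp => ?_
    rw [← HasAntidiagonal.mem_antidiagonal.1 hp]
    exact hL _ _ (Ideal.mul_mem_mul (f.2 _) (hg _))

theorem mem_reesIdeal_of_coe_eq_monomial (hL : IsReesStable I L) {f : multiReesAlgebra I}
    {a : σ →₀ ℕ} {z : R} (hf : f.1 = MvPolynomial.monomial a z) :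
    f ∈ hL.reesIdeal ↔ z ∈ L a := by
  classical
  refine ⟨fun h => by simpa [hf] using h a, fun h b => ?_⟩
  rw [hf, MvPolynomial.coeff_monomial]
  split_ifs with hab
  · exact hab ▸ h
  · exact Ideal.zero_mem _

theorem multiPow_mul_le (hL : IsReesStable I L) {a k u v : σ →₀ ℕ} (huv : u + v = a + k)
    (hv : v ≤ k) : multiPow I u * L v ≤ multiPow I a * L k := by
  obtain ⟨w, rfl⟩ := exists_add_of_le hv
  obtain rfl : u = a + w := add_right_cancel (b := v) (by rw [huv]; abel)
  rw [multiPow_add, mul_assoc, add_comm v w]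
  exact Ideal.mul_mono_right (hL w v)

theorem exists_forall_add_le_multiPow_mul [Finite σ] [IsNoetherianRing R] (hL : IsReesStable I L)
    (hLI : ∀ a, L a ≤ multiPow I a) :
    ∃ k, ∀ a, L (a + k) ≤ multiPow I a * L k := by
  classical
  obtain ⟨g, hg⟩ := IsNoetherian.noetherian hL.reesIdeal
  let k := g.sup fun f => f.1.support.sup id
  refine ⟨k, fun a z hz => ?_⟩
  let Z : multiReesAlgebra I :=
    ⟨MvPolynomial.monomial (a + k) z, monomial_mem_multiReesAlgebra (hLI _ hz)⟩
  have hZ : Z ∈ Submodule.span (multiReesAlgebra I) (g : Set (multiReesAlgebra I)) :=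
    hg ▸ (hL.mem_reesIdeal_of_coe_eq_monomial rfl).2 hz
  obtain ⟨φ, -, hφ⟩ := Submodule.mem_span_finset.1 hZ
  have hz_eq : z = ∑ f ∈ g, ((φ f).1 * f.1).coeff (a + k) := by
    have := congrArg (fun f : multiReesAlgebra I => f.1.coeff (a + k)) hφ
    simpa [Z, MvPolynomial.coeff_sum] using this.symm
  rw [hz_eq]
  refine Ideal.sum_mem _ fun f hf => ?_
  rw [MvPolynomial.coeff_mul]
  refine Ideal.sum_mem _ fun p hp => ?_
  by_cases hv : p.2 ∈ f.1.support
  · have hvk : p.2 ≤ k := (Finset.le_sup (f := id) hv).trans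
      (Finset.le_sup (f := fun f : multiReesAlgebra I => f.1.support.sup id) hf)
    refine hL.multiPow_mul_le (HasAntidiagonal.mem_antidiagonal.1 hp) hvk ?_
    exact Ideal.mul_mem_mul ((φ f).2 _) ((hg ▸ Submodule.subset_span hf : f ∈ hL.reesIdeal) _)
  · rw [MvPolynomial.notMem_support_iff.1 hv, mul_zero]
    exact Ideal.zero_mem _

variable {Φ : (σ →₀ ℕ) → Ideal R}

variable (I) in
theorem multiPow_self : IsReesStable I (multiPow I) :=
  fun a b => (multiPow_add I a b).ge

variable (I) in
theorem const (J : Ideal R) : IsReesStable I fun _ => J :=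
  fun _ _ => Ideal.mul_le_right

theorem mul_const (hL : IsReesStable I L) (J : Ideal R) : IsReesStable I fun a => L a * J :=
  fun a b => (mul_assoc (multiPow I a) (L b) J).ge.trans (Ideal.mul_mono_left (hL a b))

theorem inf (hL : IsReesStable I L) (hΦ : IsReesStable I Φ) :
    IsReesStable I fun a => L a ⊓ Φ a :=
  fun a b => le_inf ((Ideal.mul_mono_right inf_le_left).trans (hL a b))
    ((Ideal.mul_mono_right inf_le_right).trans (hΦ a b))

theorem shift (hL : IsReesStable I L) (e : σ →₀ ℕ) : IsReesStable I fun a => L (a + e) :=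
  fun a b => (hL a (b + e)).trans_eq (congrArg L (add_assoc a b e).symm)

theorem colon (hL : IsReesStable I L) (x : R) : IsReesStable I fun a => (L a).colon {x} := by
  refine fun a b => Ideal.mul_le.2 fun u hu v hv => ?_
  rw [Submodule.mem_colon_singleton, smul_eq_mul] at hv ⊢
  rw [mul_assoc]
  exact hL a b (Ideal.mul_mem_mul hu hv)

theorem multiPow_inf_colon_le_of_step {x : R} {e f k : σ →₀ ℕ} (hΦ : Antitone Φ)
    (hΦI : ∀ a, Φ a ≤ multiPow I a)
    (h : ∀ a ≥ k, multiPow I a ⊓ (Φ (a + e + f)).colon {x} ≤ Φ (a + e)) (j : ℕ) :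
    ∀ a ≥ k, multiPow I a ⊓ (Φ (a + (j + 1) • e + f)).colon {x} ≤ Φ (a + (j + 1) • e) := by
  induction j with
  | zero => simpa using h
  | succ j ih =>
    intro a ha z ⟨hza, hzx⟩
    rw [succ_nsmul e (j + 1), ← add_assoc] at hzx ⊢
    have hle : a + (j + 1) • e + f ≤ a + (j + 1) • e + e + f := by
      rw [add_assoc _ e f, add_comm e f, ← add_assoc]; exact le_self_add
    have hz : z ∈ Φ (a + (j + 1) • e) :=
      ih a ha ⟨hza, Submodule.colon_mono (hΦ hle) le_rfl hzx⟩
    exact h _ (ha.trans le_self_add) ⟨hΦI _ hz, hzx⟩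

end IsReesStable

/-- The embedding `y ↦ y t_i` of `I i` into the multi-Rees algebra. -/
noncomputable def multiReesDegreeOne (i : σ) : I i →ₗ[R] multiReesAlgebra I :=
  ((MvPolynomial.monomial (Finsupp.single i 1)).comp (I i).subtype).codRestrict
    (Subalgebra.toSubmodule (multiReesAlgebra I))
    fun y => monomial_mem_multiReesAlgebra (by simp)

variable {I} in
theorem mem_span_multiReesDegreeOne_pow_of_coe_eq_monomial {i : σ} {r : ℕ} {y : R}
    (hy : y ∈ I i ^ r) {Y : multiReesAlgebra I}
    (hY : Y.1 = MvPolynomial.monomial (Finsupp.single i r) y) :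
    Y ∈ Ideal.span (Set.range (multiReesDegreeOne I i)) ^ r := by
  set J := Ideal.span (Set.range (multiReesDegreeOne I i))
  suffices h : I i ^ r ≤ (((J ^ r).restrictScalars R).map
      (multiReesAlgebra I).val.toLinearMap).comap (MvPolynomial.monomial (Finsupp.single i r)) by
    obtain ⟨Z, hZ, hZY⟩ := h hy
    exact Subtype.ext (hZY.trans hY.symm) ▸ hZ
  clear hy hY
  induction r with
  | zero => exact fun y _ => ⟨algebraMap R _ y, by simp, by simp⟩
  | succ r ih =>
    rw [pow_succ]
    refine Ideal.mul_le.2 fun u hu v hv => ?_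
    obtain ⟨U, hU, hUu⟩ := ih hu
    refine ⟨U * multiReesDegreeOne I i ⟨v, hv⟩, ?_, ?_⟩
    · rw [pow_succ]
      exact Ideal.mul_mem_mul hU (Ideal.subset_span ⟨_, rfl⟩)
    · rw [Finsupp.single_add, ← MvPolynomial.monomial_mul, ← hUu]
      rfl

namespace IsReesStable

variable {I} [Finite σ] [IsNoetherianRing R] {Φ : (σ →₀ ℕ) → Ideal R}

theorem exists_eventually_generic_pow_mul_le (hΦ : IsReesStable I Φ) (i : σ) :
    ∃ r, ∀ᶠ x : I i in genericFilter R (I i), ∀ a,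
      I i ^ r * (multiPow I a ⊓ (Φ (a + Finsupp.single i 1)).colon {(x : R)}) ≤
        Φ (a + Finsupp.single i r) := by
  obtain ⟨r, hr⟩ := exists_eventually_generic_colon (multiReesDegreeOne I i) hΦ.reesIdeal
  refine ⟨r, hr.mono fun x hx a => Ideal.mul_le.2 fun y hy z ⟨hza, hzx⟩ => ?_⟩
  rw [SetLike.mem_coe, Submodule.mem_colon_singleton, smul_eq_mul, mul_comm, add_comm] at hzx
  let Z : multiReesAlgebra I := ⟨MvPolynomial.monomial a z, monomial_mem_multiReesAlgebra hza⟩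
  let Y : multiReesAlgebra I := ⟨MvPolynomial.monomial (Finsupp.single i r) y,
    monomial_mem_multiReesAlgebra ((multiPow_single I i r).ge hy)⟩
  have hxZ : multiReesDegreeOne I i x * Z ∈ hΦ.reesIdeal :=
    (hΦ.mem_reesIdeal_of_coe_eq_monomial MvPolynomial.monomial_mul).2 hzx
  have hYZ := hx Z hxZ Y (mem_span_multiReesDegreeOne_pow_of_coe_eq_monomial hy rfl)
  rw [add_comm]
  exact (hΦ.mem_reesIdeal_of_coe_eq_monomial MvPolynomial.monomial_mul).1 hYZ

theorem eventually_generic_multiPow_inf_colon_le (hΦ : IsReesStable I Φ) (i : σ) :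
    ∀ᶠ x : I i in genericFilter R (I i), ∃ k, ∀ a ≥ k,
      multiPow I a ⊓ (Φ (a + Finsupp.single i 1)).colon {(x : R)} ≤ Φ a := by
  obtain ⟨r, hr⟩ := hΦ.exists_eventually_generic_pow_mul_le i
  refine hr.mono fun x hx => ?_
  obtain ⟨k, hk⟩ := ((multiPow_self I).inf ((hΦ.shift (Finsupp.single i 1)).colon x.1)
    ).exists_forall_add_le_multiPow_mul fun _ => inf_le_left
  refine ⟨Finsupp.single i r + k, fun a ha => ?_⟩
  obtain ⟨b, rfl⟩ := exists_add_of_le ha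
  have hb : Finsupp.single i r + k + b = b + Finsupp.single i r + k := by abel
  rw [hb]
  refine (hk (b + Finsupp.single i r)).trans ?_
  rw [multiPow_add, multiPow_single, mul_assoc]
  refine (Ideal.mul_mono_right (hx k)).trans ((hΦ b _).trans_eq ?_)
  rw [add_assoc, add_comm k]

theorem exists_colon_singleton_le_multiPow (hΦ : IsReesStable I Φ) (hΦI : ∀ a, Φ a ≤ multiPow I a)
    {x : R} (hx : x ∈ nonZeroDivisors R) :
    ∃ k, ∀ a, (Φ (a + k)).colon {x} ≤ multiPow I a := by
  obtain ⟨k, hk⟩ := (hΦ.inf (const I (Ideal.span {x}))).exists_forall_add_le_multiPow_mul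
    fun a => inf_le_left.trans (hΦI a)
  refine ⟨k, fun a z hz => ?_⟩
  have hzx : z * x ∈ multiPow I a * Ideal.span {x} :=
    Ideal.mul_mono_right inf_le_right <| hk a
      ⟨Submodule.mem_colon_singleton.1 hz, Ideal.mul_mem_left _ z (Ideal.mem_span_singleton_self x)⟩
  obtain ⟨w, hw, hwz⟩ := Ideal.mem_mul_span_singleton.1 hzx
  exact (mul_cancel_right_mem_nonZeroDivisors hx).1 hwz ▸ hw

theorem exists_nonZeroDivisor_forall_colon_le [IsLocalRing R] [Infinite (ResidueField R)]
    (hR : HasZeroSocle R) (hΦ : IsReesStable I Φ) (hanti : Antitone Φ)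
    (hΦI : ∀ a, Φ a ≤ multiPow I a) {i : σ} (hI : maximalIdeal R ≤ (I i).radical) :
    ∃ x ∈ I i, x ∈ nonZeroDivisors R ∧
      ∃ k, ∀ a ≥ k, (Φ (a + Finsupp.single i 1)).colon {x} ≤ Φ a := by
  let e : σ →₀ ℕ := Finsupp.equivFunOnFinite.symm 1
  obtain ⟨x, hx, k, hk⟩ := ((hR.eventually_generic_mem_nonZeroDivisors hI).and
    ((hΦ.shift e).eventually_generic_multiPow_inf_colon_le i)).exists
  obtain ⟨l, hl⟩ := hΦ.exists_colon_singleton_le_multiPow hΦI hx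
  obtain ⟨j, hj⟩ : ∃ j : ℕ, l ≤ (j + 1) • e :=
    ⟨l.degree, fun i => by simpa [e] using (l.le_degree i).trans (Nat.le_succ _)⟩
  refine ⟨x, x.2, hx, k + (j + 1) • e, fun a ha => ?_⟩
  obtain ⟨b, rfl⟩ := exists_add_of_le ha
  rw [add_right_comm _ _ b]
  have hstep : ∀ a ≥ k, multiPow I a ⊓ (Φ (a + e + Finsupp.single i 1)).colon {(x : R)} ≤
      Φ (a + e) := fun a ha => by rw [add_right_comm]; exact hk a ha
  refine le_trans (le_inf ?_ le_rfl)
    (multiPow_inf_colon_le_of_step hanti hΦI hstep j (k + b) le_self_add)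
  refine (Submodule.colon_mono (hanti ?_) le_rfl).trans (hl (k + b))
  exact (add_le_add_right hj (k + b)).trans le_self_add

end IsReesStable

end MultiRees

/-! ### Lengths and filtrations -/

section Length

variable {R : Type*} [CommRing R]

theorem lenI_eq_toNat_length (M : Type*) [AddCommGroup M] [Module R M] :
    lenI R M = ((Module.length R M).toNat : ℤ) := by
  rw [lenI, ← Module.coe_length]
  rfl

theorem lenI_quotient_antitone {J K : Ideal R} (hJ : IsFiniteLength R (R ⧸ J)) (h : J ≤ K) :
    lenI R (R ⧸ K) ≤ lenI R (R ⧸ J) := by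
  rw [lenI_eq_toNat_length, lenI_eq_toNat_length]
  exact_mod_cast ENat.toNat_le_toNat (Module.length_le_of_surjective (Submodule.factor h)
    (Submodule.factor_surjective h)) (Module.length_ne_top_iff.2 hJ)

theorem length_quotient_eq_length_quotient_colon_add (J : Ideal R) (x : R) :
    Module.length R (R ⧸ J) =
      Module.length R (R ⧸ J.colon {x}) + Module.length R (R ⧸ (J ⊔ Ideal.span {x})) := by
  let f : (R ⧸ J.colon {x}) →ₗ[R] R ⧸ J :=
    Submodule.mapQ (J.colon {x}) J (LinearMap.mulRight R x)
      fun _ => Submodule.mem_colon_singleton.1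
  refine Module.length_eq_add_of_exact f (Submodule.factor le_sup_left) ?_
    (Submodule.factor_surjective _) ?_
  · refine (injective_iff_map_eq_zero f).2 fun y hy => ?_
    obtain ⟨z, rfl⟩ := Submodule.Quotient.mk_surjective _ y
    exact (Submodule.Quotient.mk_eq_zero _).2 <|
      Submodule.mem_colon_singleton.2 ((Submodule.Quotient.mk_eq_zero _).1 hy)
  · intro y
    obtain ⟨z, rfl⟩ := Submodule.Quotient.mk_surjective _ y
    refine (Submodule.Quotient.mk_eq_zero _).trans ⟨fun hz => ?_, ?_⟩
    · obtain ⟨j, hj, w, hw, rfl⟩ := Submodule.mem_sup.1 hz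
      obtain ⟨a, rfl⟩ := Ideal.mem_span_singleton'.1 hw
      refine ⟨Submodule.Quotient.mk a, (Submodule.Quotient.eq _).2 ?_⟩
      simpa using hj
    · rintro ⟨w, hw⟩
      obtain ⟨a, rfl⟩ := Submodule.Quotient.mk_surjective _ w
      have haz : z - a * x ∈ J := (Submodule.Quotient.eq _).1 hw.symm
      rw [← sub_add_cancel z (a * x)]
      exact Submodule.add_mem_sup haz (Ideal.mem_span_singleton'.2 ⟨a, rfl⟩)

theorem lenI_quotient_eq_lenI_quotient_colon_add {J : Ideal R} (hJ : IsFiniteLength R (R ⧸ J))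
    (x : R) : lenI R (R ⧸ J) =
      lenI R (R ⧸ J.colon {x}) + lenI R (R ⧸ (J ⊔ Ideal.span {x})) := by
  have h := length_quotient_eq_length_quotient_colon_add J x
  have hne := WithTop.add_ne_top.1 (h ▸ Module.length_ne_top_iff.2 hJ)
  simp only [lenI_eq_toNat_length]
  rw [h, ENat.toNat_add hne.1 hne.2, Nat.cast_add]

theorem lenI_quotient_map_mk (J K : Ideal R) :
    lenI (R ⧸ K) ((R ⧸ K) ⧸ J.map (Ideal.Quotient.mk K)) = lenI R (R ⧸ (J ⊔ K)) := by
  rw [lenI_eq_toNat_length, lenI_eq_toNat_length,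
    ← Module.length_eq_of_surjective (S := R) (R := R ⧸ K) Ideal.Quotient.mk_surjective]
  exact congrArg _ (congrArg _ ((DoubleQuot.quotQuotEquivQuotSupₐ R K J).toLinearEquiv.trans
    (Submodule.quotEquivOfEq _ _ (sup_comm K J))).length_eq)

theorem isFiniteLength_quotient_of_maximalIdeal_le_radical [IsLocalRing R] [IsNoetherianRing R]
    {J : Ideal R} (h : maximalIdeal R ≤ J.radical) : IsFiniteLength R (R ⧸ J) := by
  by_cases hJ : J = ⊤
  · have : Subsingleton (R ⧸ J) := Ideal.Quotient.subsingleton_iff.2 hJ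
    exact .of_subsingleton
  have hmin : maximalIdeal R ∈ J.minimalPrimes :=
    ⟨⟨inferInstance, le_maximalIdeal hJ⟩, fun P hP _ => h.trans (hP.1.radical_le_iff.2 hP.2)⟩
  have := IsLocalRing.quotient_artinian_of_mem_minimalPrimes_of_isLocalRing J hmin
  rw [← Module.length_ne_top_iff,
    Module.length_eq_of_surjective (S := R) (R := R ⧸ J) Ideal.Quotient.mk_surjective]
  exact Module.length_ne_top

end Length

theorem eventually_atTop_of_forall_natCast_add {s : ℕ} {P : (Fin s → ℤ) → Prop} {m : Fin s → ℤ}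
    {k : Fin s →₀ ℕ} (h : ∀ a ≥ k, P ((fun j => (a j : ℤ)) + m)) : ∀ᶠ n in Filter.atTop, P n := by
  refine Filter.eventually_atTop.2 ⟨(fun j => (k j : ℤ)) + m, fun n hn => ?_⟩
  have hk (j : Fin s) : (k j : ℤ) ≤ n j - m j := le_sub_iff_add_le.2 (hn j)
  convert h (Finsupp.equivFunOnFinite.symm fun j => (n j - m j).toNat)
    fun j => (Int.le_toNat ((Int.natCast_nonneg _).trans (hk j))).2 (hk j)
  ext j
  have := hk j
  simp only [Finsupp.equivFunOnFinite_symm_apply_apply, Int.ofNat_toNat, Pi.add_apply]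
  omega

theorem eventually_atTop_iff_exists_natCast_le {s : ℕ} {P : (Fin s → ℤ) → Prop} :
    (∀ᶠ n in Filter.atTop, P n) ↔ ∃ N : ℕ, ∀ n : Fin s → ℤ, (∀ i, (N : ℤ) ≤ n i) → P n := by
  refine ⟨fun h => ?_, fun ⟨N, hN⟩ => Filter.eventually_atTop.2 ⟨fun _ => N, hN⟩⟩
  obtain ⟨m, hm⟩ := Filter.eventually_atTop.1 h
  refine ⟨∑ i, (m i).toNat, fun n hn => hm n fun i => (Int.self_le_toNat _).trans ?_⟩
  refine le_trans (Nat.cast_le.2 ?_) (hn i)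
  exact Finset.single_le_sum (f := fun i => (m i).toNat) (fun _ _ => Nat.zero_le _)
    (Finset.mem_univ i)

theorem rel_of_forall_rel_add_single_of_le {s : ℕ} {β : Type*} (r : β → β → Prop) [Std.Refl r]
    [IsTrans β r] {f : (Fin s → ℤ) → β} (h : ∀ n, 0 ≤ n → ∀ i, r (f n) (f (n + Pi.single i 1)))
    {m n : Fin s → ℤ} (hm : 0 ≤ m) (hmn : m ≤ n) : r (f m) (f n) := by
  have key (k : Fin s →₀ ℕ) : ∀ m, 0 ≤ m → r (f m) (f (m + fun j => (k j : ℤ))) := by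
    induction k using Finsupp.induction_linear with
    | zero => exact fun m _ => by simpa [← Pi.zero_def] using refl_of r (f m)
    | add k l hk hl =>
      intro m hm
      have hm' : 0 ≤ m + fun j => (k j : ℤ) := add_nonneg hm fun j => Int.natCast_nonneg _
      simpa [add_assoc] using! trans_of r (hk m hm) (hl _ hm')
    | single i t =>
      intro m hm
      have hsingle (t : ℕ) : (fun j => (Finsupp.single i t j : ℤ)) = Pi.single i (t : ℤ) := by
        ext j; obtain rfl | hj := eq_or_ne j i <;> simp [*]
      rw [hsingle]
      induction t with
      | zero => simpa using refl_of r (f m)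
      | succ t ih =>
        have hstep := h (m + Pi.single i (t : ℤ))
          (add_nonneg hm (Pi.single_nonneg.2 (Int.natCast_nonneg t))) i
        rw [add_assoc, ← Pi.single_add] at hstep
        exact_mod_cast trans_of r ih hstep
  convert key (Finsupp.equivFunOnFinite.symm fun j => (n j - m j).toNat) m hm
  ext j
  have : m j ≤ n j := hmn j
  simp only [Finsupp.equivFunOnFinite_symm_apply_apply, Int.ofNat_toNat, Pi.add_apply]
  omega

theorem prodPow_natCast {R : Type*} [CommRing R] {s : ℕ} (I : Fin s → Ideal R) (a : Fin s →₀ ℕ) :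
    prodPow I (fun j => (a j : ℤ)) = multiPow I a := by
  simp [prodPow, multiPow, Finsupp.prod_fintype]

theorem prodPow_single {R : Type*} [CommRing R] {s : ℕ} (I : Fin s → Ideal R) (i : Fin s) :
    prodPow I (Pi.single i 1) = I i := by
  rw [prodPow, Finset.prod_eq_single i] <;> simp +contextual

theorem maximalIdeal_le_radical_prodPow {R : Type*} [CommRing R] [IsLocalRing R] {s : ℕ}
    {I : Fin s → Ideal R} (hI : ∀ i, maximalIdeal R ≤ (I i).radical) (n : Fin s → ℤ) :
    maximalIdeal R ≤ (prodPow I n).radical := by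
  refine Finset.prod_induction (fun i => I i ^ (n i).toNat) (fun J => maximalIdeal R ≤ J.radical)
    (fun J K hJ hK => (le_inf hJ hK).trans (Ideal.radical_mul J K).ge) ?_ fun i _ => ?_
  · simp [Ideal.one_eq_top, Ideal.radical_top]
  · obtain h | h := eq_or_ne (n i).toNat 0
    · simp [h, Ideal.one_eq_top, Ideal.radical_top]
    · exact (hI i).trans (Ideal.radical_pow _ h).ge

namespace AdmissibleFiltration

variable {R : Type*} [CommRing R] {s : ℕ} {I : Fin s → Ideal R} (F : AdmissibleFiltration R s I)

theorem F_zero : F.F 0 = ⊤ :=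
  top_le_iff.1 <| (F.prodPow_le 0).trans' (by simp [prodPow])

theorem pow_le (m : Fin s → ℤ) (k : ℕ) : F.F m ^ k ≤ F.F (k • m) := by
  induction k with
  | zero => simp [F_zero]
  | succ k ih =>
    rw [pow_succ, succ_nsmul]
    exact (Ideal.mul_mono_left ih).trans (F.mul_le _ _)

theorem le_colon_singleton {i : Fin s} {x : R} (hx : x ∈ I i) (n : Fin s → ℤ) :
    F.F n ≤ (F.F (n + Pi.single i 1)).colon {x} := fun _ hz =>
  Submodule.mem_colon_singleton.2 <| F.mul_le _ _ <|
    Ideal.mul_mem_mul hz (F.prodPow_le _ ((prodPow_single I i).ge hx))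

theorem exists_F_natCast_add_eq_multiPow_mul :
    ∃ m, ∀ a : Fin s →₀ ℕ, F.F ((fun j => (a j : ℤ)) + m) = multiPow I a * F.F m := by
  obtain ⟨m, -, hm⟩ := F.admissible
  exact ⟨m, fun a => (hm _ fun j => Int.natCast_nonneg _).trans (by rw [prodPow_natCast])⟩

theorem isFiniteLength_quotient [IsLocalRing R] [IsNoetherianRing R]
    (hI : ∀ i, IsMPrimary R (I i)) (n : Fin s → ℤ) : IsFiniteLength R (R ⧸ F.F n) :=
  isFiniteLength_quotient_of_maximalIdeal_le_radical <|
    (maximalIdeal_le_radical_prodPow (fun i => (hI i).2) n).trans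
      (Ideal.radical_mono (F.prodPow_le n))

theorem eventually_F_le [IsLocalRing R] {i : Fin s} (hI : I i ≠ ⊤) {J : Ideal R}
    (hJ : IsFiniteLength R (R ⧸ J)) : ∀ᶠ n in Filter.atTop, F.F n ≤ J := by
  have : IsArtinianRing (R ⧸ J) :=
    isArtinian_of_tower R (isFiniteLength_iff_isNoetherian_isArtinian.1 hJ).2
  obtain ⟨q, hq⟩ := exists_maximalIdeal_pow_le_of_isArtinianRing_quotient J
  obtain ⟨m, hm⟩ := F.exists_F_natCast_add_eq_multiPow_mul
  refine eventually_atTop_of_forall_natCast_add (m := m) (k := Finsupp.single i q) fun a ha => ?_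
  calc F.F ((fun j => (a j : ℤ)) + m) = multiPow I a * F.F m := hm a
    _ ≤ multiPow I (Finsupp.single i q) := Ideal.mul_le_left.trans (multiPow_antitone I ha)
    _ ≤ maximalIdeal R ^ q := (multiPow_single I i q).trans_le
      (Ideal.pow_right_mono (le_maximalIdeal hI) q)
    _ ≤ J := hq

theorem exists_nonZeroDivisor_eventually_colon_le [IsLocalRing R] [IsNoetherianRing R]
    [Infinite (ResidueField R)] (hR : HasZeroSocle R) {i : Fin s}
    (hI : maximalIdeal R ≤ (I i).radical) :
    ∃ x ∈ I i, x ∈ nonZeroDivisors R ∧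
      ∀ᶠ n in Filter.atTop, (F.F (n + Pi.single i 1)).colon {x} ≤ F.F n := by
  obtain ⟨m, hm⟩ := F.exists_F_natCast_add_eq_multiPow_mul
  obtain ⟨x, hxI, hx, k, hk⟩ :=
    ((IsReesStable.multiPow_self I).mul_const (F.F m)).exists_nonZeroDivisor_forall_colon_le hR
      (fun a b h => Ideal.mul_mono_left (multiPow_antitone I h)) (fun _ => Ideal.mul_le_left) hI
  refine ⟨x, hxI, hx, eventually_atTop_of_forall_natCast_add (m := m) (k := k) fun a ha => ?_⟩
  have hcast : (fun j => (a j : ℤ)) + m + Pi.single i 1 =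
      (fun j => ((a + Finsupp.single i 1 : Fin s →₀ ℕ) j : ℤ)) + m := by
    ext j
    obtain rfl | hj := eq_or_ne j i <;> simp [*, add_right_comm]
  rw [hcast, hm, hm]
  exact hk a ha

end AdmissibleFiltration

/-! ### Hilbert polynomials -/

section HilbertPolynomial

/-- The exponents `α ∈ ℕˢ` with `|α| ≤ d`, indexing the Hilbert coefficients in dimension `d`. -/
def hilbExponents (s d : ℕ) : Finset (Fin s → ℕ) :=
  {α ∈ Fintype.piFinset fun _ => Finset.range (d + 1) | ∑ i, α i ≤ d}

theorem mem_hilbExponents {s d : ℕ} {α : Fin s → ℕ} : α ∈ hilbExponents s d ↔ ∑ i, α i ≤ d := by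
  simp only [hilbExponents, Finset.mem_filter, Fintype.mem_piFinset, Finset.mem_range,
    Order.lt_add_one_iff, and_iff_right_iff_imp]
  exact fun h i => (Finset.single_le_sum (fun _ _ => Nat.zero_le _) (Finset.mem_univ i)).trans h

/-- The multi-index binomial coefficient `∏ᵢ binom(nᵢ + αᵢ − 1, αᵢ)`. -/
def prodMultichoose {s : ℕ} (n : Fin s → ℤ) (α : Fin s → ℕ) : ℤ :=
  ∏ i, Ring.multichoose (n i) (α i)

theorem hilbPoly_eq_sum_prodMultichoose (s d : ℕ) (c : (Fin s → ℕ) → ℤ) (n : Fin s → ℤ) :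
    hilbPoly s d c n = ∑ α ∈ hilbExponents s d,
      (-1) ^ (d - ∑ i, α i) * c α * prodMultichoose n α := by
  refine Finset.sum_nbij (fun α i => (α i : ℕ)) (fun α hα => ?_) (fun α _ β _ h => ?_)
    (fun α hα => ?_) fun α _ => by
      simp only [prodMultichoose, Ring.multichoose_eq]
  · exact mem_hilbExponents.2 (Finset.mem_filter.1 hα).2
  · exact funext fun i => Fin.ext (congrFun h i)
  · have hα' := Finset.mem_filter.1 hα
    refine ⟨fun i => ⟨α i, Finset.mem_range.1 (Fintype.mem_piFinset.1 hα'.1 i)⟩, ?_, rfl⟩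
    simpa using hα'.2

@[simp]
theorem prodMultichoose_zero_right {s : ℕ} (n : Fin s → ℤ) : prodMultichoose n 0 = 1 := by
  simp [prodMultichoose]

theorem prodMultichoose_zero_left {s : ℕ} {α : Fin s → ℕ} (hα : α ≠ 0) :
    prodMultichoose 0 α = 0 := by
  obtain ⟨i, hi⟩ := Function.ne_iff.1 hα
  obtain ⟨k, hk⟩ := Nat.exists_eq_succ_of_ne_zero hi
  exact Finset.prod_eq_zero (Finset.mem_univ i) (by simp [hk])

theorem prodMultichoose_sub_single_of_eq_zero {s : ℕ} (n : Fin s → ℤ) {α : Fin s → ℕ}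
    {i : Fin s} (h : α i = 0) : prodMultichoose (n - Pi.single i 1) α = prodMultichoose n α := by
  refine Finset.prod_congr rfl fun j _ => ?_
  obtain rfl | hj := eq_or_ne j i <;> simp [*]

theorem prodMultichoose_sub_prodMultichoose_sub_single {s : ℕ} (n : Fin s → ℤ) (α : Fin s → ℕ)
    (i : Fin s) :
    prodMultichoose n (α + Pi.single i 1) -
      prodMultichoose (n - Pi.single i 1) (α + Pi.single i 1) = prodMultichoose n α := by
  have hpascal := Ring.multichoose_succ_succ (n i - 1) (α i)
  rw [sub_add_cancel] at hpascal
  have hcompl (m : Fin s → ℤ) (hm : ∀ j ≠ i, m j = n j) :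
      ∏ j ∈ {i}ᶜ, Ring.multichoose (m j) ((α + Pi.single i 1 : Fin s → ℕ) j) =
        ∏ j ∈ {i}ᶜ, Ring.multichoose (n j) (α j) :=
    Finset.prod_congr rfl fun j hj => by
      have hj : j ≠ i := by simpa using hj
      simp [hm j hj, hj]
  simp only [prodMultichoose, Fintype.prod_eq_mul_prod_compl i]
  rw [hcompl n fun _ _ => rfl, hcompl (n - Pi.single i 1) fun j hj => by simp [hj], ← sub_mul]
  simp [hpascal]

theorem hilbPoly_succ_sub_hilbPoly_sub_single (s d : ℕ) (c : (Fin s → ℕ) → ℤ) (n : Fin s → ℤ)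
    (i : Fin s) : hilbPoly s (d + 1) c n - hilbPoly s (d + 1) c (n - Pi.single i 1) =
      hilbPoly s d (fun α => c (α + Pi.single i 1)) n := by
  simp only [hilbPoly_eq_sum_prodMultichoose, ← Finset.sum_sub_distrib, ← mul_sub]
  refine (Finset.sum_of_injOn (· + Pi.single i 1) (add_left_injective _).injOn
    (fun α hα => ?_) (fun β hβ hβα => ?_) fun α _ => ?_).symm
  · simpa [mem_hilbExponents, Finset.sum_add_distrib] using hα
  · suffices h : β i = 0 by rw [prodMultichoose_sub_single_of_eq_zero n h, sub_self, mul_zero]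
    by_contra h
    have hβ' : β - Pi.single i 1 + Pi.single i 1 = β :=
      tsub_add_cancel_of_le <|
        update_le_iff.2 ⟨Nat.one_le_iff_ne_zero.2 h, fun _ _ => Nat.zero_le _⟩
    refine hβα ⟨β - Pi.single i 1, ?_, hβ'⟩
    rw [← hβ'] at hβ
    simpa [mem_hilbExponents, Finset.sum_add_distrib] using hβ
  · rw [prodMultichoose_sub_prodMultichoose_sub_single]
    simp [Finset.sum_add_distrib]

theorem hilbPoly_add_single_sub (s d : ℕ) (c : (Fin s → ℕ) → ℤ) (n : Fin s → ℤ) (i : Fin s) :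
    hilbPoly s (d + 1) c (n + Pi.single i 1) - hilbPoly s (d + 1) c n =
      hilbPoly s d (fun α => c (α + Pi.single i 1)) (n + Pi.single i 1) := by
  rw [← hilbPoly_succ_sub_hilbPoly_sub_single, add_sub_cancel_right]

theorem hilbPoly_zero_right (s d : ℕ) (c : (Fin s → ℕ) → ℤ) :
    hilbPoly s d c 0 = (-1) ^ d * c 0 := by
  rw [hilbPoly_eq_sum_prodMultichoose,
    Finset.sum_eq_single_of_mem 0 (by simp [mem_hilbExponents])
      fun α _ hα => by rw [prodMultichoose_zero_left hα, mul_zero]]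
  simp

theorem hilbPoly_zero_degree (s : ℕ) (c : (Fin s → ℕ) → ℤ) (n : Fin s → ℤ) :
    hilbPoly s 0 c n = c 0 := by
  have h : hilbExponents s 0 = {0} := by ext; simp [mem_hilbExponents, funext_iff]
  simp [hilbPoly_eq_sum_prodMultichoose, h]

end HilbertPolynomial

/-! ### Dimension one -/

theorem isHilbCoeffs_iff_eventually {R : Type*} [CommRing R] {s : ℕ} {I : Fin s → Ideal R}
    {F : AdmissibleFiltration R s I} {d : ℕ} {c : (Fin s → ℕ) → ℤ} :
    IsHilbCoeffs F d c ↔ ∀ᶠ n in Filter.atTop, hilbPoly s d c n = hilbFn F n :=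
  eventually_atTop_iff_exists_natCast_le.symm

namespace AdmissibleFiltration

variable {R : Type*} [CommRing R] {s : ℕ} {I : Fin s → Ideal R} {F : AdmissibleFiltration R s I}
  {c : (Fin s → ℕ) → ℤ} {n : Fin s → ℤ} {i : Fin s} {x : R}

variable (F) in
theorem hilbFn_zero : hilbFn F 0 = 0 := by
  have : Subsingleton (R ⧸ F.F 0) := Ideal.Quotient.subsingleton_iff.2 F.F_zero
  simp [hilbFn, lenI_eq_toNat_length]

variable [IsLocalRing R] [IsNoetherianRing R]

theorem hilbFn_add_single_of_colon_eq (hI : ∀ i, IsMPrimary R (I i))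
    (hcolon : (F.F (n + Pi.single i 1)).colon {x} = F.F n) :
    hilbFn F (n + Pi.single i 1) =
      hilbFn F n + lenI R (R ⧸ (F.F (n + Pi.single i 1) ⊔ Ideal.span {x})) := by
  rw [hilbFn, lenI_quotient_eq_lenI_quotient_colon_add (F.isFiniteLength_quotient hI _) x, hcolon,
    hilbFn]

theorem hilbFn_add_single_le (hI : ∀ i, IsMPrimary R (I i)) (hxI : x ∈ I i)
    (hx : IsFiniteLength R (R ⧸ Ideal.span {x})) (n : Fin s → ℤ) :
    hilbFn F (n + Pi.single i 1) ≤ hilbFn F n + lenI R (R ⧸ Ideal.span {x}) := by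
  rw [hilbFn, lenI_quotient_eq_lenI_quotient_colon_add (F.isFiniteLength_quotient hI _) x]
  exact add_le_add
    (lenI_quotient_antitone (F.isFiniteLength_quotient hI n) (F.le_colon_singleton hxI n))
    (lenI_quotient_antitone hx le_sup_right)

theorem coeff_single_eq_lenI (hI : ∀ i, IsMPrimary R (I i)) (hc : IsHilbCoeffs F 1 c)
    (hxI : x ∈ I i) (hx : IsFiniteLength R (R ⧸ Ideal.span {x}))
    (hcolon : ∀ᶠ n in Filter.atTop, (F.F (n + Pi.single i 1)).colon {x} ≤ F.F n) :
    c (Pi.single i 1) = lenI R (R ⧸ Ideal.span {x}) := by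
  have hshift : Filter.Tendsto (· + Pi.single i 1 : (Fin s → ℤ) → Fin s → ℤ) .atTop .atTop :=
    Filter.tendsto_atTop_add_const_right _ _ Filter.tendsto_id
  rw [isHilbCoeffs_iff_eventually] at hc
  obtain ⟨n, ⟨hn, hn'⟩, hle, hcol⟩ := ((hc.and (hshift.eventually hc)).and
    ((hshift.eventually (F.eventually_F_le (hI i).1 hx)).and hcolon)).exists
  have hH := hilbFn_add_single_of_colon_eq hI (hcol.antisymm (F.le_colon_singleton hxI n))
  have hP := hilbPoly_add_single_sub s 0 c n i
  rw [sup_eq_right.2 hle] at hH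
  rw [hilbPoly_zero_degree, zero_add, zero_add] at hP
  linarith

theorem hilbPoly_eq_hilbFn_of_krullDimLE_one [Infinite (ResidueField R)] [Ring.KrullDimLE 1 R]
    (hR : HasZeroSocle R) (hI : ∀ i, IsMPrimary R (I i)) (hc : IsHilbCoeffs F 1 c)
    (hc0 : c 0 = 0) (hn : 0 ≤ n) : hilbPoly s 1 c n = hilbFn F n := by
  have hstep (n : Fin s → ℤ) (i : Fin s) : hilbPoly s 1 c n - hilbFn F n ≤
      hilbPoly s 1 c (n + Pi.single i 1) - hilbFn F (n + Pi.single i 1) := by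
    obtain ⟨x, hxI, hx, hcolon⟩ := F.exists_nonZeroDivisor_eventually_colon_le hR (hI i).2
    have hfin := isFiniteLength_quotient_span_singleton R hx
    have hP := hilbPoly_add_single_sub s 0 c n i
    rw [hilbPoly_zero_degree, zero_add, zero_add, coeff_single_eq_lenI hI hc hxI hfin hcolon] at hP
    linarith [hilbFn_add_single_le (F := F) hI hxI hfin n]
  have hmono {m n : Fin s → ℤ} (hm : 0 ≤ m) (hmn : m ≤ n) :
      hilbPoly s 1 c m - hilbFn F m ≤ hilbPoly s 1 c n - hilbFn F n :=
    rel_of_forall_rel_add_single_of_le (· ≤ ·) (f := fun n => hilbPoly s 1 c n - hilbFn F n)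
      (fun n _ i => hstep n i) hm hmn
  obtain ⟨m, hm, hnm⟩ :=
    ((isHilbCoeffs_iff_eventually.1 hc).and (Filter.eventually_ge_atTop n)).exists
  refine sub_eq_zero.1 (le_antisymm ?_ ?_)
  · simpa [hm] using hmono hn hnm
  · simpa [hilbPoly_zero_right, hc0, hilbFn_zero] using hmono le_rfl hn

end AdmissibleFiltration

/-! ### Dimension two -/

section Quotient

variable {R : Type*} [CommRing R]

theorem infinite_residueField_quotient [IsLocalRing R] [Infinite (ResidueField R)] (J : Ideal R)
    [IsLocalRing (R ⧸ J)] : Infinite (ResidueField (R ⧸ J)) :=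
  have : IsLocalHom (Ideal.Quotient.mk J) := .of_surjective _ Ideal.Quotient.mk_surjective
  .of_injective (ResidueField.map (Ideal.Quotient.mk J)) (RingHom.injective _)

theorem IsMPrimary.map_mk [IsLocalRing R] {I : Ideal R} (hI : IsMPrimary R I) (J : Ideal R)
    [IsLocalRing (R ⧸ J)] : IsMPrimary (R ⧸ J) (I.map (Ideal.Quotient.mk J)) := by
  have hmax := IsLocalRing.map_maximalIdeal_of_surjective (Ideal.Quotient.mk J)
    Ideal.Quotient.mk_surjective
  refine ⟨ne_top_of_le_ne_top (maximalIdeal.isMaximal (R ⧸ J)).ne_top ?_, ?_⟩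
  · exact hmax ▸ Ideal.map_mono (le_maximalIdeal hI.1)
  · exact hmax ▸ (Ideal.map_mono hI.2).trans (Ideal.map_radical_le _)

theorem HasZeroSocle.of_isSMulRegular [IsLocalRing R] {a : R} (ha : a ∈ maximalIdeal R)
    (hreg : IsSMulRegular R a) : HasZeroSocle R :=
  fun w hw => hreg (by simpa using hw a ha)

theorem mem_span_singleton_of_mul_mem {a b x w : R} (ha : IsSMulRegular R a)
    (hb : IsSMulRegular (QuotSMulTop a R) b) (hx : x ∈ nonZeroDivisors R)
    (haw : a * w ∈ Ideal.span {x}) (hbw : b * w ∈ Ideal.span {x}) : w ∈ Ideal.span {x} := by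
  obtain ⟨u, hu⟩ := Ideal.mem_span_singleton'.1 haw
  obtain ⟨v, hv⟩ := Ideal.mem_span_singleton'.1 hbw
  have hbu : b * u = a * v :=
    (mul_cancel_right_mem_nonZeroDivisors hx).1 (by linear_combination b * hu - a * hv)
  have hu0 : (Submodule.Quotient.mk u : QuotSMulTop a R) = 0 := by
    refine hb.right_eq_zero_of_smul ?_
    rw [← Submodule.Quotient.mk_smul, Submodule.Quotient.mk_eq_zero, smul_eq_mul, hbu]
    exact Submodule.smul_mem_pointwise_smul v a ⊤ trivial
  obtain ⟨t, -, rfl : a * t = u⟩ := (Submodule.mem_smul_pointwise_iff_exists _ _ _).1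
    ((Submodule.Quotient.mk_eq_zero _).1 hu0)
  exact Ideal.mem_span_singleton'.2 ⟨t, ha (by simpa [mul_assoc] using hu)⟩

theorem krullDimLE_one_quotient_span_singleton (hdim : ringKrullDim R ≤ 2) {x : R}
    (hx : x ∈ nonZeroDivisors R) : Ring.KrullDimLE 1 (R ⧸ Ideal.span {x}) := by
  rw [Ring.krullDimLE_iff, Nat.cast_one, ← ENat.WithBot.add_le_add_one_right_iff,
    one_add_one_eq_two]
  exact (ringKrullDim_quotient_succ_le_of_nonZeroDivisor hx).trans hdim

variable [IsLocalRing R]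

theorem IsCMLocal.hasZeroSocle (hR : IsCMLocal R) (hdim : 1 ≤ ringKrullDim R) :
    HasZeroSocle R := by
  obtain ⟨_ | ⟨a, rs⟩, hmem, hreg, hlen⟩ := hR
  · rw [← hlen] at hdim
    exact absurd hdim (by norm_num)
  · exact .of_isSMulRegular (hmem a (by simp))
      ((RingTheory.Sequence.isRegular_cons_iff R a rs).1 hreg).1

theorem IsCMLocal.hasZeroSocle_quotient (hR : IsCMLocal R) (hdim : 2 ≤ ringKrullDim R) {x : R}
    (hx : x ∈ nonZeroDivisors R) [IsLocalRing (R ⧸ Ideal.span {x})] :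
    HasZeroSocle (R ⧸ Ideal.span {x}) := by
  obtain ⟨_ | ⟨a, _ | ⟨b, rs⟩⟩, hmem, hreg, hlen⟩ := hR
  · rw [← hlen] at hdim
    exact absurd hdim (by norm_num)
  · rw [← hlen] at hdim
    exact absurd hdim (by norm_num)
  obtain ⟨ha, hreg⟩ := (RingTheory.Sequence.isRegular_cons_iff R a _).1 hreg
  have hb := ((RingTheory.Sequence.isRegular_cons_iff _ b rs).1 hreg).1
  intro w hw
  obtain ⟨w, rfl⟩ := Ideal.Quotient.mk_surjective w
  have hmul {y : R} (hy : y ∈ maximalIdeal R) : y * w ∈ Ideal.span {x} := by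
    rw [← Ideal.Quotient.eq_zero_iff_mem, map_mul]
    refine hw _ ?_
    rw [← IsLocalRing.map_maximalIdeal_of_surjective _ Ideal.Quotient.mk_surjective]
    exact Ideal.mem_map_of_mem _ hy
  exact Ideal.Quotient.eq_zero_iff_mem.2 <|
    mem_span_singleton_of_mul_mem ha hb hx (hmul (hmem a (by simp))) (hmul (hmem b (by simp)))

end Quotient

theorem prodPow_map_mk {R : Type*} [CommRing R] {s : ℕ} (I : Fin s → Ideal R) (J : Ideal R)
    (n : Fin s → ℤ) : prodPow (fun i => (I i).map (Ideal.Quotient.mk J)) n =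
      (prodPow I n).map (Ideal.Quotient.mk J) := by
  simp only [prodPow, ← Ideal.mapHom_apply, map_prod, map_pow]

namespace AdmissibleFiltration

variable {R : Type*} [CommRing R] {s : ℕ} {I : Fin s → Ideal R}

/-- The filtration induced by `F` on `R ⧸ J`, used to lower the dimension. -/
def quotient (F : AdmissibleFiltration R s I) (J : Ideal R) :
    AdmissibleFiltration (R ⧸ J) s fun i => (I i).map (Ideal.Quotient.mk J) where
  F n := (F.F n).map (Ideal.Quotient.mk J)
  prodPow_le n := (prodPow_map_mk I J n).trans_le (Ideal.map_mono (F.prodPow_le n))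
  mul_le m n := (Ideal.map_mul _ _ _).ge.trans (Ideal.map_mono (F.mul_le m n))
  antitone m n h := Ideal.map_mono (F.antitone m n h)
  plus_eq n := congrArg _ (F.plus_eq n)
  admissible := by
    obtain ⟨m, hm0, hm⟩ := F.admissible
    exact ⟨m, hm0, fun n hn => by rw [prodPow_map_mk, hm n hn, Ideal.map_mul]⟩

variable {F : AdmissibleFiltration R s I} {c : (Fin s → ℕ) → ℤ} {n : Fin s → ℤ} {i : Fin s} {x : R}

theorem colon_eq_of_H1ReesVanishes (hF : H1ReesVanishes F) (hxI : x ∈ I i)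
    (hcolon : ∀ᶠ n in Filter.atTop, (F.F (n + Pi.single i 1)).colon {x} ≤ F.F n) (hn : 0 ≤ n) :
    (F.F (n + Pi.single i 1)).colon {x} = F.F n := by
  refine le_antisymm (fun z hz => ?_) (F.le_colon_singleton hxI n)
  rw [Submodule.mem_colon_singleton] at hz
  obtain ⟨k, hk⟩ : ∃ k : ℕ, (F.F (n + (k + 1) • evec s + Pi.single i 1)).colon {x} ≤
      F.F (n + (k + 1) • evec s) := by
    obtain ⟨N, hN⟩ := eventually_atTop_iff_exists_natCast_le.1 hcolon
    refine ⟨N, hN _ fun j => ?_⟩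
    have hnj : 0 ≤ n j := hn j
    simp only [evec, nsmul_eq_mul, Nat.cast_add, Nat.cast_one, Pi.add_apply, Pi.mul_apply,
      Pi.natCast_apply, Pi.one_apply, mul_one]
    omega
  rw [← hF n hn]
  refine Submodule.mem_iSup_of_mem k (Submodule.mem_colon.2 fun w hw => hk ?_)
  have hzw := F.mul_le _ _ (Ideal.mul_mem_mul hz (F.pow_le _ _ hw))
  rw [Submodule.mem_colon_singleton, add_right_comm]
  simpa [mul_right_comm] using hzw

theorem hilbFn_quotient (J : Ideal R) (n : Fin s → ℤ) :
    hilbFn (F.quotient J) n = lenI R (R ⧸ (F.F n ⊔ J)) :=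
  lenI_quotient_map_mk (F.F n) J

variable [IsLocalRing R] [IsNoetherianRing R]

theorem hilbFn_quotient_span_singleton (hI : ∀ i, IsMPrimary R (I i))
    (hcolon : (F.F (n + Pi.single i 1)).colon {x} = F.F n) :
    hilbFn (F.quotient (Ideal.span {x})) (n + Pi.single i 1) =
      hilbFn F (n + Pi.single i 1) - hilbFn F n := by
  rw [hilbFn_quotient, hilbFn_add_single_of_colon_eq hI hcolon, add_sub_cancel_left]

theorem isHilbCoeffs_quotient_span_singleton {d : ℕ} (hI : ∀ i, IsMPrimary R (I i))
    (hc : IsHilbCoeffs F (d + 1) c) (hxI : x ∈ I i)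
    (hcolon : ∀ᶠ n in Filter.atTop, (F.F (n + Pi.single i 1)).colon {x} ≤ F.F n) :
    IsHilbCoeffs (F.quotient (Ideal.span {x})) d fun α => c (α + Pi.single i 1) := by
  rw [isHilbCoeffs_iff_eventually] at hc ⊢
  have hshift : Filter.Tendsto (· - Pi.single i 1 : (Fin s → ℤ) → Fin s → ℤ) .atTop .atTop := by
    simpa only [sub_eq_add_neg] using!
      Filter.tendsto_atTop_add_const_right _ (-Pi.single i 1) Filter.tendsto_id
  filter_upwards [hc, hshift.eventually hc, hshift.eventually hcolon] with n hn hn' hcol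
  have hH := hilbFn_quotient_span_singleton hI (hcol.antisymm (F.le_colon_singleton hxI _))
  have hP := hilbPoly_add_single_sub s d c (n - Pi.single i 1) i
  rw [sub_add_cancel] at hH hP
  rw [hH, ← hP, hn, hn']

variable [Infinite (ResidueField R)]

theorem hilbPoly_sub_hilbFn_eq_add_single_of_ringKrullDim_eq_two (hR : IsCMLocal R)
    (hdim : ringKrullDim R = 2) (hI : ∀ i, IsMPrimary R (I i)) (hF : H1ReesVanishes F)
    (hc : IsHilbCoeffs F 2 c) (hc1 : c (Pi.single i 1) = 0) (hn : 0 ≤ n) :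
    hilbPoly s 2 c n - hilbFn F n =
      hilbPoly s 2 c (n + Pi.single i 1) - hilbFn F (n + Pi.single i 1) := by
  have hsocle : HasZeroSocle R := hR.hasZeroSocle (hdim ▸ one_le_two)
  obtain ⟨x, hxI, hx, hcolon⟩ := F.exists_nonZeroDivisor_eventually_colon_le hsocle (hI i).2
  have : Nontrivial (R ⧸ Ideal.span {x}) := Ideal.Quotient.nontrivial_iff.2 <|
    ne_top_of_le_ne_top (hI i).1 ((Ideal.span_singleton_le_iff_mem _).2 hxI)
  have : IsLocalRing (R ⧸ Ideal.span {x}) := .of_surjective' _ Ideal.Quotient.mk_surjective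
  have := infinite_residueField_quotient (Ideal.span {x})
  have := krullDimLE_one_quotient_span_singleton hdim.le hx
  have hquot : hilbPoly s 1 (fun α => c (α + Pi.single i 1)) (n + Pi.single i 1) =
      hilbFn (F.quotient (Ideal.span {x})) (n + Pi.single i 1) :=
    hilbPoly_eq_hilbFn_of_krullDimLE_one (hR.hasZeroSocle_quotient hdim.ge hx)
      (fun j => (hI j).map_mk _) (isHilbCoeffs_quotient_span_singleton hI hc hxI hcolon)
      (by rw [zero_add, hc1]) (add_nonneg hn (Pi.single_nonneg.2 zero_le_one))
  have hH := hilbFn_quotient_span_singleton hI (colon_eq_of_H1ReesVanishes hF hxI hcolon hn)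
  linarith [hilbPoly_add_single_sub s 1 c n i]

theorem hilbPoly_eq_hilbFn_of_ringKrullDim_eq_two (hR : IsCMLocal R) (hdim : ringKrullDim R = 2)
    (hI : ∀ i, IsMPrimary R (I i)) (hF : H1ReesVanishes F) (hc : IsHilbCoeffs F 2 c)
    (hc1 : ∀ i, c (Pi.single i 1) = 0) (hn : 0 ≤ n) : hilbPoly s 2 c n = hilbFn F n := by
  obtain ⟨m, hm, hnm⟩ :=
    ((isHilbCoeffs_iff_eventually.1 hc).and (Filter.eventually_ge_atTop n)).exists
  have hconst := rel_of_forall_rel_add_single_of_le (· = ·)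
    (f := fun n => hilbPoly s 2 c n - hilbFn F n) (fun _ hn i =>
      hilbPoly_sub_hilbFn_eq_add_single_of_ringKrullDim_eq_two hR hdim hI hF hc (hc1 i) hn) hn hnm
  exact sub_eq_zero.1 (hconst.trans (sub_eq_zero.2 hm))

end AdmissibleFiltration

/-- STATEMENT 13: Let `(R,m)` be Cohen–Macaulay local of dimension `1 ≤ d ≤ 2` with
infinite residue field, `I₁,…,I_s` `m`-primary, `F` an `I`-admissible filtration with
Hilbert coefficients `c`, and suppose `e_{(d−1)e_i}(F) = 0` for `i = 1,…,s`.  Then: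
(1) if `d = 1` then `P_F(n) = H_F(n)` for all `n ∈ ℕˢ`;
(2) if `d = 2` and `H¹_{R₊₊}(R(F))_n = 0` for all `n ∈ ℕˢ` (by Proposition 4.1 of the
    paper this is the condition `F̆(n) = F(n)` for all `n ≥ 0`), then
    `P_F(n) = H_F(n)` for all `n ∈ ℕˢ` and `e_{(0,…,0)}(F) = 0`. -/
theorem vanishing_coeffs_postulation
    (R : Type*) [CommRing R] [IsLocalRing R] [IsNoetherianRing R]
    [Infinite (IsLocalRing.ResidueField R)]
    (d s : ℕ) (hd1 : 1 ≤ d) (hd2 : d ≤ 2)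
    (hdim : ringKrullDim R = d) (hCM : IsCMLocal R)
    (I : Fin s → Ideal R) (hI : ∀ i, IsMPrimary R (I i))
    (F : AdmissibleFiltration R s I)
    (c : (Fin s → ℕ) → ℤ) (hc : IsHilbCoeffs F d c)
    (hzero : ∀ i : Fin s, c (fun j => if j = i then d - 1 else 0) = 0) :
    (d = 1 → ∀ n : Fin s → ℤ, 0 ≤ n → hilbPoly s d c n = hilbFn F n)
    ∧ (d = 2 → H1ReesVanishes F →
        (∀ n : Fin s → ℤ, 0 ≤ n → hilbPoly s d c n = hilbFn F n)
        ∧ c (fun _ => 0) = 0) := by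
  have hsocle : HasZeroSocle R := hCM.hasZeroSocle (hdim ▸ by exact_mod_cast hd1)
  refine ⟨?_, ?_⟩
  · rintro rfl n hn
    have : Ring.KrullDimLE 1 R := Ring.krullDimLE_iff.2 hdim.le
    obtain hs | ⟨⟨i⟩⟩ := isEmpty_or_nonempty (Fin s)
    · obtain ⟨N, hN⟩ := hc
      exact hN n isEmptyElim
    · have hc0 : c 0 = 0 := by simpa [← Pi.zero_def] using hzero i
      exact F.hilbPoly_eq_hilbFn_of_krullDimLE_one hsocle hI hc hc0 hn
  · rintro rfl hF
    have hc1 (i : Fin s) : c (Pi.single i 1) = 0 := by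
      convert hzero i using 2
      ext j
      simp [Pi.single_apply]
    have hP (n : Fin s → ℤ) (hn : 0 ≤ n) : hilbPoly s 2 c n = hilbFn F n :=
      AdmissibleFiltration.hilbPoly_eq_hilbFn_of_ringKrullDim_eq_two hCM hdim hI hF hc hc1 hn
    refine ⟨hP, ?_⟩
    have hP0 := hP 0 le_rfl
    rw [hilbPoly_zero_right, F.hilbFn_zero] at hP0
    simpa [← Pi.zero_def] using hP0
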